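/- Let Φ assign to every finite vector with nonnegative entries (of any length) a value Φ(p) ∈ ℝ≥0, invariantly under permuting entries and under appending zero entries, such that Φ(p ⊕ q) = Φ(p) + Φ(q) and Φ(p ⊗ q) = Φ(p)·Φ(q) for all p, q, Φ of the single-entry vector (1) is 1, and Φ of the single-entry vector (0) is 0. (i) If Φ is such that p ≽₀,₁ q implies Φ(p) ≤ Φ(q), then there exists α ∈ [0,1] with Φ = f_α; conversely, each f_α with α ∈ [0,1] has all of these properties. (ii) If Φ is such that p ≽₀,₁ q implies Φ(p) ≥ Φ(q), then there exists α ∈ (−∞,0] ∪ [1,∞) with Φ = f_α; conversely, each f_α with α ∈ (−∞,0] ∪ [1,∞) has all of these properties. -/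

import Mathlib

open scoped BigOperators NNReal

noncomputable section

/-- A probability vector on a finite index type. -/
def IsProbVec {ι : Type*} [Fintype ι] (p : ι → ℝ) : Prop :=
  (∀ i, 0 ≤ p i) ∧ ∑ i, p i = 1

/-- A (column-)stochastic matrix: nonnegative entries, every column sums to `1`. -/
def IsStochastic {ι κ : Type*} [Fintype ι] [Fintype κ] (T : ι → κ → ℝ) : Prop :=
  (∀ i j, 0 ≤ T i j) ∧ ∀ j, ∑ i, T i j = 1

/-- Matrix–vector multiplication. -/
def matVec {ι κ : Type*} [Fintype κ] (T : ι → κ → ℝ) (v : κ → ℝ) : ι → ℝ :=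
  fun i => ∑ j, T i j * v j

/-- Kronecker product of two vectors. -/
def kron {ι κ : Type*} (p : ι → ℝ) (q : κ → ℝ) : ι × κ → ℝ :=
  fun x => p x.1 * q x.2

/-- `n`-fold Kronecker power of a vector. -/
def kpow {ι : Type*} (p : ι → ℝ) (n : ℕ) : (Fin n → ι) → ℝ :=
  fun f => ∏ j, p (f j)

/-- Kronecker product reindexed along `Fin (m * n)`. -/
def kronFin {m n : ℕ} (p : Fin m → ℝ) (q : Fin n → ℝ) : Fin (m * n) → ℝ :=
  fun i => kron p q (finProdFinEquiv.symm i)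

/-- The sum of the `k` largest entries of a nonnegative vector, expressed as the
largest sum over subsets of cardinality at most `k`. -/
def topSum {ι : Type*} [Fintype ι] (p : ι → ℝ) (k : ℕ) : ℝ :=
  ⨆ s ∈ {s : Finset ι | s.card ≤ k}, ∑ i ∈ s, p i

/-- Majorization for nonnegative vectors (possibly of different lengths):
equal total sums, and for each `k` the sum of the `k` largest entries of `p` is
at least that of `q`. -/
def Majorizes {ι κ : Type*} [Fintype ι] [Fintype κ] (p : ι → ℝ) (q : κ → ℝ) : Prop :=
  (∑ i, p i = ∑ j, q j) ∧ ∀ k : ℕ, topSum q k ≤ topSum p k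

/-- The size of the support, `‖p‖₀`. -/
def supp0 {ι : Type*} [Fintype ι] (p : ι → ℝ) : ℕ :=
  (Finset.univ.filter fun i => p i ≠ 0).card

/-- Entrywise nonnegativity. -/
def NonnegVec {n : ℕ} (p : Fin n → ℝ) : Prop := ∀ i, 0 ≤ p i

/-- The modified majorization preorder `≽₀,₁`: majorization plus equality of
support sizes. -/
def MajMod {ι κ : Type*} [Fintype ι] [Fintype κ] (p : ι → ℝ) (q : κ → ℝ) : Prop :=
  Majorizes p q ∧ supp0 p = supp0 q

/-- `f_α(p) = ∑_{i ∈ supp p} (p i)^α`. -/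
def fA {ι : Type*} [Fintype ι] (α : ℝ) (p : ι → ℝ) : ℝ :=
  ∑ i, if p i = 0 then 0 else p i ^ α

/-- Shannon entropy (the terms with `p i = 0` vanish). -/
def H1ent {ι : Type*} [Fintype ι] (p : ι → ℝ) : ℝ := -∑ i, p i * Real.log (p i)

/-- `H₀'(p) = ∑_{i ∈ supp p} log p_i`. -/
def H0' {ι : Type*} [Fintype ι] (p : ι → ℝ) : ℝ :=
  ∑ i, if p i = 0 then 0 else Real.log (p i)

/-- Rényi entropy of order `α` (with `α = 1` the Shannon entropy). -/
def Hent {ι : Type*} [Fintype ι] (α : ℝ) (p : ι → ℝ) : ℝ :=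
  if α = 1 then -∑ i, p i * Real.log (p i)
  else (1 / (1 - α)) * Real.log (∑ i, if p i = 0 then 0 else p i ^ α)

/-- Min-entropy `H_∞(p) = - log max_i p_i`. -/
def HentInf {ι : Type*} [Fintype ι] (p : ι → ℝ) : ℝ := -Real.log (⨆ i, p i)

/-- Kullback–Leibler divergence (the terms with `p i = 0` vanish). -/
def KL {n : ℕ} (p q : Fin n → ℝ) : ℝ :=
  ∑ i, p i * Real.log (p i / q i)

/-- Rényi divergence of order `α` for vectors with common support. -/
def Renyi {n : ℕ} (α : ℝ) (p q : Fin n → ℝ) : ℝ :=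
  if α = 1 then ∑ i, p i * Real.log (p i / q i)
  else (1 / (α - 1)) * Real.log (∑ i, if p i = 0 then 0 else p i ^ α * q i ^ (1 - α))

/-- Max-divergence `D_∞(p‖q) = max_{i ∈ supp q} log (p_i / q_i)`. -/
def RenyiInf {n : ℕ} (p q : Fin n → ℝ) : ℝ :=
  ⨆ i ∈ Finset.univ.filter (fun i => q i ≠ 0), Real.log (p i / q i)

/-- Rényi divergence with values in the extended reals `[0, ∞]`. -/
def RenyiE {n : ℕ} (α : ℝ) (p q : Fin n → ℝ) : EReal :=
  if α = 1 then
    (if ∀ i, p i ≠ 0 → q i ≠ 0 then ((∑ i, p i * Real.log (p i / q i) : ℝ) : EReal) else ⊤)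
  else if α < 1 then
    (if ∃ i, p i ≠ 0 ∧ q i ≠ 0 then
      (((1 / (α - 1)) *
        Real.log (∑ i, if p i = 0 ∨ q i = 0 then 0 else p i ^ α * q i ^ (1 - α)) : ℝ) : EReal)
    else (⊤ : EReal))
  else
    (if ∀ i, p i ≠ 0 → q i ≠ 0 then
      (((1 / (α - 1)) *
        Real.log (∑ i, if p i = 0 then 0 else p i ^ α * q i ^ (1 - α)) : ℝ) : EReal)
    else (⊤ : EReal))

/-- The common support of a tuple of vectors. -/
def suppIdx {d n : ℕ} (P : Fin d → Fin n → ℝ) : Finset (Fin n) :=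
  Finset.univ.filter fun i => ∃ k, P k i ≠ 0

/-- `f_α(P) = ∑_{i ∈ I} ∏_k (p_i^{(k)})^{α_k}` with `I` the common support. -/
def fMat {d n : ℕ} (α : Fin d → ℝ) (P : Fin d → Fin n → ℝ) : ℝ :=
  ∑ i ∈ suppIdx P, ∏ k, P k i ^ α k

/-- The matrix `α`-divergence `D_α`. -/
def Dmat {d n : ℕ} (α : Fin d → ℝ) (P : Fin d → Fin n → ℝ) : ℝ :=
  (1 / ((⨆ k, α k) - 1)) * Real.log (∑ i ∈ suppIdx P, ∏ k, P k i ^ α k)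

/-- The tropical matrix divergence `D^𝕋_β`. -/
def DmatT {d n : ℕ} (β : Fin d → ℝ) (P : Fin d → Fin n → ℝ) : ℝ :=
  (1 / (⨆ k, β k)) * Real.log (⨆ i ∈ suppIdx P, ∏ k, P k i ^ β k)

/-- Membership in `A₊`: entries summing to `1`, all nonnegative. -/
def memAplus {d : ℕ} (α : Fin d → ℝ) : Prop := (∑ k, α k = 1) ∧ ∀ k, 0 ≤ α k

/-- Membership in `A₋`: entries summing to `1`, one entry `≥ 1`, the others `≤ 0`. -/
def memAminus {d : ℕ} (α : Fin d → ℝ) : Prop :=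
  (∑ k, α k = 1) ∧ ∃ k, 1 ≤ α k ∧ ∀ l, l ≠ k → α l ≤ 0

/-- Membership in `B₋`: entries summing to `0`, one entry `≥ 0`, the others `≤ 0`. -/
def memBminus {d : ℕ} (β : Fin d → ℝ) : Prop :=
  (∑ k, β k = 0) ∧ ∃ k, 0 ≤ β k ∧ ∀ l, l ≠ k → β l ≤ 0

/-- `α` is none of the standard basis vectors `e₁, …, e_d`. -/
def notBasis {d : ℕ} (α : Fin d → ℝ) : Prop := ∀ k, α ≠ Pi.single k 1

/-- ℓ¹-distance of two vectors, padding with zeros to a common length. -/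
def l1PadDist {m n : ℕ} (p : Fin m → ℝ) (q : Fin n → ℝ) : ℝ :=
  ∑ i : Fin (max m n),
    |(if h : (i : ℕ) < m then p ⟨(i : ℕ), h⟩ else 0) -
      (if h : (i : ℕ) < n then q ⟨(i : ℕ), h⟩ else 0)|

/-- Index type of the direct sum `⨁_{s=0}^{n-1} p^{⊗(n-1-s)} ⊗ q^{⊗s}`. -/
abbrev TrickIdx (m m' n : ℕ) : Type :=
  Σ s : Fin n, (Fin (n - 1 - (s : ℕ)) → Fin m) × (Fin (s : ℕ) → Fin m')

/-- The standard catalyst `(1/n) ⨁_{s=0}^{n-1} p^{⊗(n-1-s)} ⊗ q^{⊗s}`. -/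
def trick {m m' : ℕ} (p : Fin m → ℝ) (q : Fin m' → ℝ) (n : ℕ) : TrickIdx m m' n → ℝ :=
  fun x => (1 / (n : ℝ)) * (kpow p (n - 1 - (x.1 : ℕ)) x.2.1 * kpow q (x.1 : ℕ) x.2.2)

/-- A valid tuple: nonnegative entries and common support across the tuple. -/
def TupOK {d n : ℕ} (P : Fin d → Fin n → ℝ) : Prop :=
  (∀ k i, 0 ≤ P k i) ∧ ∀ k l i, P k i ≠ 0 ↔ P l i ≠ 0

/-- Matrix majorization of tuples: a single stochastic matrix carrying each column
of `P` to the corresponding column of `Q`. -/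
def TupMaj {d m n : ℕ} (P : Fin d → Fin m → ℝ) (Q : Fin d → Fin n → ℝ) : Prop :=
  ∃ T : Fin n → Fin m → ℝ, IsStochastic T ∧ ∀ k, matVec T (P k) = Q k

/-- The basic properties of a normalized additive and multiplicative
functional on finite nonnegative vectors of arbitrary length: nonnegative
values, permutation invariance, invariance under appending a zero entry,
additivity under direct sums, multiplicativity under Kronecker products, and
normalization on the single-entry vectors `(1)` and `(0)`. -/
def PhiBase (Φ : ∀ n : ℕ, (Fin n → ℝ) → ℝ) : Prop :=
  (∀ (n : ℕ) (p : Fin n → ℝ), NonnegVec p → 0 ≤ Φ n p) ∧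
  (∀ (n : ℕ) (σ : Equiv.Perm (Fin n)) (p : Fin n → ℝ), NonnegVec p →
    Φ n (p ∘ σ) = Φ n p) ∧
  (∀ (n : ℕ) (p : Fin n → ℝ), NonnegVec p → Φ (n + 1) (Fin.snoc p 0) = Φ n p) ∧
  (∀ (m n : ℕ) (p : Fin m → ℝ) (q : Fin n → ℝ), NonnegVec p → NonnegVec q →
    Φ (m + n) (Fin.append p q) = Φ m p + Φ n q) ∧
  (∀ (m n : ℕ) (p : Fin m → ℝ) (q : Fin n → ℝ), NonnegVec p → NonnegVec q →
    Φ (m * n) (kronFin p q) = Φ m p * Φ n q) ∧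
  Φ 1 (fun _ => 1) = 1 ∧ Φ 1 (fun _ => 0) = 0


/-! ### Auxiliary lemmas -/

lemma topSum_le_of {ι : Type*} [Fintype ι] (p : ι → ℝ) (k : ℕ) (M : ℝ) (hM : 0 ≤ M)
    (h : ∀ s : Finset ι, s.card ≤ k → ∑ i ∈ s, p i ≤ M) : topSum p k ≤ M := by
  unfold topSum
  exact Real.iSup_le (fun s => Real.iSup_le (fun hs => h s hs) hM) hM

lemma le_topSum {ι : Type*} [Fintype ι] (p : ι → ℝ) (k : ℕ) (s : Finset ι) (hs : s.card ≤ k) :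
    ∑ i ∈ s, p i ≤ topSum p k := by
  unfold topSum
  have h1 : BddAbove (Set.range fun s : Finset ι =>
      ⨆ (_ : s ∈ {s : Finset ι | s.card ≤ k}), ∑ i ∈ s, p i) :=
    (Set.finite_range _).bddAbove
  refine le_trans ?_ (le_ciSup h1 s)
  have : s ∈ {s : Finset ι | s.card ≤ k} := hs
  rw [ciSup_pos this]

/-- Decreasing rearrangement as a sequence padded by zeros. -/
def srt {m : ℕ} (p : Fin m → ℝ) : ℕ → ℝ :=
  fun i => if h : i < m then p (Tuple.sort (fun j => - p j) ⟨i, h⟩) else 0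

lemma srt_nonneg {m : ℕ} (p : Fin m → ℝ) (hp : NonnegVec p) (i : ℕ) : 0 ≤ srt p i := by
  unfold srt
  split_ifs
  · exact hp _
  · exact le_rfl

lemma srt_anti {m : ℕ} (p : Fin m → ℝ) (hp : NonnegVec p) : Antitone (srt p) := by
  intro i j hij
  by_cases hj : j < m
  · have hi : i < m := lt_of_le_of_lt hij hj
    have := Tuple.monotone_sort (fun j => - p j)
      (show (⟨i, hi⟩ : Fin m) ≤ ⟨j, hj⟩ from hij)
    simp only [Function.comp] at this
    simp only [srt, hi, hj, dif_pos]
    linarith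
  · have : srt p j = 0 := by simp [srt, hj]
    rw [this]
    exact srt_nonneg p hp i

lemma srt_fin {m : ℕ} (p : Fin m → ℝ) (i : Fin m) :
    srt p i = p (Tuple.sort (fun j => - p j) i) := by
  simp [srt]

lemma sum_srt {m : ℕ} (p : Fin m → ℝ) (g : ℝ → ℝ) :
    ∑ i ∈ Finset.range m, g (srt p i) = ∑ i, g (p i) := by
  rw [Finset.sum_range]
  simp only [srt_fin]
  exact Equiv.sum_comp (Tuple.sort (fun j => - p j)) (fun i => g (p i))

lemma sum_le_range (a : ℕ → ℝ) (ha : Antitone a) (h0 : ∀ i, 0 ≤ a i) (T : Finset ℕ) (k : ℕ)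
    (hT : T.card ≤ k) : ∑ i ∈ T, a i ≤ ∑ i ∈ Finset.range k, a i := by
  have e1 := Finset.sum_inter_add_sum_sdiff T (Finset.range k) a
  have e2 := Finset.sum_inter_add_sum_sdiff (Finset.range k) T a
  rw [Finset.inter_comm] at e2
  have hc : (T \ Finset.range k).card ≤ (Finset.range k \ T).card := by
    have c1 := Finset.card_sdiff_add_card_inter T (Finset.range k)
    have c2 := Finset.card_sdiff_add_card_inter (Finset.range k) T
    rw [Finset.inter_comm] at c2
    rw [Finset.card_range] at c2
    omega
  have i1 : ∑ i ∈ T \ Finset.range k, a i ≤ (T \ Finset.range k).card • a k := by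
    apply Finset.sum_le_card_nsmul
    intro i hi
    simp at hi
    exact ha hi.2
  have i2 : (Finset.range k \ T).card • a k ≤ ∑ i ∈ Finset.range k \ T, a i := by
    apply Finset.card_nsmul_le_sum
    intro i hi
    simp at hi
    exact ha hi.1.le
  have i3 : (T \ Finset.range k).card • a k ≤ (Finset.range k \ T).card • a k :=
    nsmul_le_nsmul_left (h0 k) hc
  linarith

lemma topSum_le_srt {m : ℕ} (p : Fin m → ℝ) (hp : NonnegVec p) (k : ℕ) :
    topSum p k ≤ ∑ i ∈ Finset.range k, srt p i := by
  apply topSum_le_of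
  · exact Finset.sum_nonneg fun i _ => srt_nonneg p hp i
  intro s hs
  let e : Fin m ↪ ℕ := (Tuple.sort (fun j => - p j)).symm.toEmbedding.trans Fin.valEmbedding
  have h := sum_le_range (srt p) (srt_anti p hp) (srt_nonneg p hp) (s.map e) k (by simpa using hs)
  rw [Finset.sum_map] at h
  refine le_trans (le_of_eq ?_) h
  apply Finset.sum_congr rfl
  intro i _
  have : srt p (e i) = srt p (((Tuple.sort (fun j => - p j)).symm i : Fin m) : ℕ) := rfl
  rw [this, srt_fin]
  simp

lemma srt_le_topSum {m : ℕ} (p : Fin m → ℝ) (k : ℕ) :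
    ∑ i ∈ Finset.range k, srt p i ≤ topSum p k := by
  let σ := Tuple.sort (fun j => - p j)
  let F : Finset (Fin m) := Finset.univ.filter fun i => (i : ℕ) < k
  have hF : F.map Fin.valEmbedding = (Finset.range k).filter (· < m) := by
    ext j
    simp only [F, Finset.mem_map, Finset.mem_filter, Finset.mem_univ, true_and,
      Fin.valEmbedding_apply, Finset.mem_range]
    constructor
    · rintro ⟨a, h, rfl⟩
      exact ⟨h, a.2⟩
    · rintro ⟨h, h'⟩
      exact ⟨⟨j, h'⟩, h, rfl⟩
  have hcard : (F.map σ.toEmbedding).card ≤ k := by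
    rw [Finset.card_map, ← Finset.card_map Fin.valEmbedding, hF]
    refine (Finset.card_filter_le _ _).trans ?_
    simp
  refine le_trans (le_of_eq ?_) (le_topSum p k _ hcard)
  rw [Finset.sum_map]
  have h1 : ∑ i ∈ Finset.range k, srt p i = ∑ i ∈ (Finset.range k).filter (· < m), srt p i := by
    symm
    apply Finset.sum_subset (Finset.filter_subset _ _)
    intro x hx hx'
    have : ¬ x < m := fun h => hx' (by simp only [Finset.mem_filter]; exact ⟨hx, h⟩)
    simp [srt, this]
  rw [h1, ← hF, Finset.sum_map]
  apply Finset.sum_congr rfl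
  intro i _
  exact srt_fin p i

lemma supp0_eq {m : ℕ} (p : Fin m → ℝ) :
    supp0 p = ((Finset.range m).filter fun i => srt p i ≠ 0).card := by
  have h := sum_srt p (fun x => if x ≠ 0 then 1 else 0)
  unfold supp0
  rw [Finset.sum_boole, Finset.sum_boole] at h
  exact_mod_cast h.symm

lemma srt_pos {m : ℕ} (p : Fin m → ℝ) (hp : NonnegVec p) (i : ℕ) (hi : i < supp0 p) :
    0 < srt p i := by
  rcases (srt_nonneg p hp i).lt_or_eq with h | h
  · exact h
  exfalso
  rw [supp0_eq] at hi
  have hsub : ((Finset.range m).filter fun i => srt p i ≠ 0) ⊆ Finset.range i := by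
    intro j hj
    simp only [Finset.mem_filter, Finset.mem_range] at hj ⊢
    by_contra hc
    push Not at hc
    have h1 := srt_anti p hp hc
    have h2 := srt_nonneg p hp j
    exact hj.2 (by linarith)
  have := Finset.card_le_card hsub
  rw [Finset.card_range] at this
  omega

lemma srt_zero {m : ℕ} (p : Fin m → ℝ) (hp : NonnegVec p) (i : ℕ) (hi : supp0 p ≤ i) :
    srt p i = 0 := by
  by_contra h
  rw [supp0_eq] at hi
  have hpos : 0 < srt p i := lt_of_le_of_ne (srt_nonneg p hp i) (Ne.symm h)
  have hsub : Finset.range (i + 1) ⊆ ((Finset.range m).filter fun i => srt p i ≠ 0) := by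
    intro j hj
    simp only [Finset.mem_filter, Finset.mem_range] at hj ⊢
    have h1 : srt p i ≤ srt p j := srt_anti p hp (by omega)
    have h2 : 0 < srt p j := by linarith
    refine ⟨?_, h2.ne'⟩
    by_contra hc
    simp [srt, hc] at h2
  have := Finset.card_le_card hsub
  rw [Finset.card_range] at this
  omega

lemma supp0_le {m : ℕ} (p : Fin m → ℝ) : supp0 p ≤ m := by
  unfold supp0
  refine (Finset.card_filter_le _ _).trans ?_
  simp

lemma sum_supp {m : ℕ} (p : Fin m → ℝ) (hp : NonnegVec p) (g : ℝ → ℝ) (g0 : g 0 = 0) :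
    ∑ i, g (p i) = ∑ i ∈ Finset.range (supp0 p), g (srt p i) := by
  rw [← sum_srt p g]
  symm
  apply Finset.sum_subset
  · intro x hx
    simp only [Finset.mem_range] at hx ⊢
    exact lt_of_lt_of_le hx (supp0_le p)
  · intro x _ hx
    simp only [Finset.mem_range, not_lt] at hx
    rw [srt_zero p hp x hx, g0]

lemma abel_ineq (d w : ℕ → ℝ) (N : ℕ)
    (hd : ∀ k ≤ N, 0 ≤ ∑ i ∈ Finset.range k, d i)
    (hw : ∀ i j, i ≤ j → j < N → w j ≤ w i) :
    ∀ k, k < N → w k * ∑ i ∈ Finset.range (k + 1), d i ≤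
      ∑ i ∈ Finset.range (k + 1), w i * d i := by
  intro k
  induction k with
  | zero => intro _; simp
  | succ k ih =>
    intro hk
    have h1 := ih (by omega)
    have h2 := hd (k + 1) (by omega)
    have h3 := hw k (k + 1) (by omega) hk
    rw [Finset.sum_range_succ _ (k + 1), Finset.sum_range_succ _ (k + 1)]
    nlinarith [mul_le_mul_of_nonneg_right h3 h2]

lemma karamata (a b : ℕ → ℝ) (N : ℕ) (f c : ℝ → ℝ)
    (hf : ∀ x y, 0 < x → 0 < y → f x + c x * (y - x) ≤ f y)
    (hb : Antitone b) (apos : ∀ i < N, 0 < a i) (bpos : ∀ i < N, 0 < b i)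
    (hk : ∀ k ≤ N, ∑ i ∈ Finset.range k, b i ≤ ∑ i ∈ Finset.range k, a i)
    (hN : ∑ i ∈ Finset.range N, b i = ∑ i ∈ Finset.range N, a i) :
    ∑ i ∈ Finset.range N, f (b i) ≤ ∑ i ∈ Finset.range N, f (a i) := by
  have cm : ∀ x y, 0 < x → x ≤ y → c x ≤ c y := by
    intro x y hx hxy
    rcases hxy.lt_or_eq with h | h
    · have h1 := hf x y hx (hx.trans h)
      have h2 := hf y x (hx.trans h) hx
      by_contra hc
      push Not at hc
      nlinarith
    · rw [h]
  have hsum : 0 ≤ ∑ i ∈ Finset.range N, c (b i) * (a i - b i) := by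
    rcases N with _ | N
    · simp
    have := abel_ineq (fun i => a i - b i) (fun i => c (b i)) (N + 1) ?_ ?_ N (by omega)
    · rw [Finset.sum_sub_distrib, hN] at this
      simpa using this
    · intro k hk'
      rw [Finset.sum_sub_distrib]
      linarith [hk k hk']
    · intro i j hij hj
      exact cm _ _ (bpos j hj) (hb hij)
  have h2 : ∑ i ∈ Finset.range N, (f (b i) + c (b i) * (a i - b i)) ≤
      ∑ i ∈ Finset.range N, f (a i) := by
    apply Finset.sum_le_sum
    intro i hi
    rw [Finset.mem_range] at hi
    exact hf _ _ (bpos i hi) (apos i hi)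
  rw [Finset.sum_add_distrib] at h2
  linarith

lemma majMod_karamata {m n : ℕ} (p : Fin m → ℝ) (q : Fin n → ℝ) (hp : NonnegVec p)
    (hq : NonnegVec q) (h : MajMod p q) (f c : ℝ → ℝ) (f0 : f 0 = 0)
    (hf : ∀ x y, 0 < x → 0 < y → f x + c x * (y - x) ≤ f y) :
    ∑ i, f (q i) ≤ ∑ i, f (p i) := by
  obtain ⟨⟨hs, ht⟩, hsupp⟩ := h
  rw [sum_supp p hp f f0, sum_supp q hq f f0, ← hsupp]
  apply karamata _ _ _ f c hf (srt_anti q hq)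
  · exact fun i hi => srt_pos p hp i hi
  · exact fun i hi => srt_pos q hq i (hsupp ▸ hi)
  · intro k _
    exact (srt_le_topSum q k).trans ((ht k).trans (topSum_le_srt p hp k))
  · have h1 := sum_supp p hp (fun x => x) rfl
    have h2 := sum_supp q hq (fun x => x) rfl
    rw [← hsupp] at h2
    rw [← h1, ← h2, hs]

lemma bern_out (α : ℝ) (hα : α ≤ 0 ∨ 1 ≤ α) (r : ℝ) (hr : 0 < r) :
    1 + α * (r - 1) ≤ r ^ α := by
  rcases hα with h | h
  · rw [Real.rpow_def_of_pos hr]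
    have h1 := Real.log_le_sub_one_of_pos hr
    have h2 := Real.add_one_le_exp (Real.log r * α)
    nlinarith
  · have := one_add_mul_self_le_rpow_one_add (s := r - 1) (by linarith) h
    simpa using this

lemma bern_in (α : ℝ) (h0 : 0 ≤ α) (h1 : α ≤ 1) (r : ℝ) (hr : 0 < r) :
    r ^ α ≤ 1 + α * (r - 1) := by
  have := rpow_one_add_le_one_add_mul_self (s := r - 1) (by linarith) h0 h1
  simpa using this

lemma bern_scale (α x y : ℝ) (hx : 0 < x) (hy : 0 < y) :
    x ^ α * (y / x) ^ α = y ^ α ∧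
    x ^ α * (1 + α * (y / x - 1)) = x ^ α + (α * x ^ α / x) * (y - x) := by
  constructor
  · rw [← Real.mul_rpow hx.le (div_pos hy hx).le]
    congr 1
    field_simp
  · field_simp

lemma sub_out (α : ℝ) (hα : α ≤ 0 ∨ 1 ≤ α) (x y : ℝ) (hx : 0 < x) (hy : 0 < y) :
    x ^ α + (α * x ^ α / x) * (y - x) ≤ y ^ α := by
  obtain ⟨h1, h2⟩ := bern_scale α x y hx hy
  rw [← h1, ← h2]
  exact mul_le_mul_of_nonneg_left (bern_out α hα _ (div_pos hy hx)) (Real.rpow_pos_of_pos hx α).le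

lemma sub_in (α : ℝ) (h0 : 0 ≤ α) (h1 : α ≤ 1) (x y : ℝ) (hx : 0 < x) (hy : 0 < y) :
    y ^ α ≤ x ^ α + (α * x ^ α / x) * (y - x) := by
  obtain ⟨e1, e2⟩ := bern_scale α x y hx hy
  rw [← e1, ← e2]
  exact mul_le_mul_of_nonneg_left (bern_in α h0 h1 _ (div_pos hy hx)) (Real.rpow_pos_of_pos hx α).le

lemma fA_base (α : ℝ) : PhiBase (fun _ p => fA α p) := by
  refine ⟨?_, ?_, ?_, ?_, ?_, ?_, ?_⟩
  · intro n p hp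
    apply Finset.sum_nonneg
    intro i _
    split_ifs
    · exact le_rfl
    · exact Real.rpow_nonneg (hp i) α
  · intro n σ p _
    exact Equiv.sum_comp σ (fun i => if p i = 0 then 0 else p i ^ α)
  · intro n p _
    simp [fA, Fin.sum_univ_castSucc]
  · intro m n p q _ _
    simp [fA, Fin.sum_univ_add]
  · intro m n p q hp hq
    have e : fA α (kronFin p q) = ∑ x, if kron p q x = 0 then 0 else kron p q x ^ α :=
      Equiv.sum_comp finProdFinEquiv.symm
        (fun x => if kron p q x = 0 then 0 else kron p q x ^ α)
    beta_reduce; rw [e]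
    unfold fA
    rw [Fintype.sum_prod_type, Finset.sum_mul_sum]
    apply Finset.sum_congr rfl
    intro i _
    apply Finset.sum_congr rfl
    intro j _
    simp only [kron]
    by_cases h1 : p i = 0
    · simp [h1]
    by_cases h2 : q j = 0
    · simp [h2]
    simp [h1, h2, Real.mul_rpow (hp i) (hq j)]
  · simp [fA]
  · simp [fA]

lemma fA_out (α : ℝ) (hα : α ≤ 0 ∨ 1 ≤ α) {m n : ℕ} (p : Fin m → ℝ) (q : Fin n → ℝ)
    (hp : NonnegVec p) (hq : NonnegVec q) (h : MajMod p q) : fA α q ≤ fA α p := by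
  refine majMod_karamata p q hp hq h (fun x => if x = 0 then 0 else x ^ α)
    (fun x => α * x ^ α / x) (by simp) ?_
  intro x y hx hy
  simp only [hx.ne', hy.ne', if_false]
  exact sub_out α hα x y hx hy

lemma fA_in (α : ℝ) (h0 : 0 ≤ α) (h1 : α ≤ 1) {m n : ℕ} (p : Fin m → ℝ) (q : Fin n → ℝ)
    (hp : NonnegVec p) (hq : NonnegVec q) (h : MajMod p q) : fA α p ≤ fA α q := by
  have := majMod_karamata p q hp hq h (fun x => - (if x = 0 then 0 else x ^ α))
    (fun x => - (α * x ^ α / x)) (by simp) ?_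
  · rw [Finset.sum_neg_distrib, Finset.sum_neg_distrib] at this
    unfold fA
    linarith
  intro x y hx hy
  simp only [hx.ne', hy.ne', if_false]
  have := sub_in α h0 h1 x y hx hy
  linarith

/-- A homomorphism is determined by its values on single-entry vectors. -/
lemma phi_sum (Φ : ∀ n : ℕ, (Fin n → ℝ) → ℝ) (h : PhiBase Φ) (n : ℕ) (p : Fin n → ℝ)
    (hp : NonnegVec p) : Φ n p = ∑ i, Φ 1 (fun _ => p i) := by
  obtain ⟨_, _, hsn, happ, _, _, h0⟩ := h
  induction n with
  | zero =>
    have := hsn 0 p hp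
    have e : (Fin.snoc p 0 : Fin (0 + 1) → ℝ) = fun _ => 0 := by
      funext i
      have : i = Fin.last 0 := Fin.fin_one_eq_zero i
      rw [this, Fin.snoc_last]
    rw [e] at this
    rw [← this]
    simpa using h0
  | succ n ih =>
    have e : p = Fin.append (fun i : Fin n => p i.castSucc) (fun _ : Fin 1 => p (Fin.last n)) := by
      rw [Fin.append_right_eq_snoc]
      exact (Fin.snoc_init_self p).symm
    have h1 : NonnegVec (fun i : Fin n => p i.castSucc) := fun i => hp _
    have h2 : NonnegVec (fun _ : Fin 1 => p (Fin.last n)) := fun _ => hp _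
    rw [Fin.sum_univ_castSucc, ← ih _ h1, ← happ _ _ _ _ h1 h2, ← e]

lemma phi_mul (Φ : ∀ n : ℕ, (Fin n → ℝ) → ℝ) (h : PhiBase Φ) (x y : ℝ) (hx : 0 ≤ x)
    (hy : 0 ≤ y) : Φ 1 (fun _ => x * y) = Φ 1 (fun _ => x) * Φ 1 (fun _ => y) := by
  obtain ⟨_, _, _, _, hm, _, _⟩ := h
  exact hm 1 1 (fun _ => x) (fun _ => y) (fun _ => hx) (fun _ => hy)

lemma additive_bdd (A : ℝ → ℝ) (hA : ∀ x y, A (x + y) = A x + A y) (a b M : ℝ) (hab : a < b)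
    (hM : ∀ t, a < t → t < b → A t ≤ M) : ∀ t, A t = A 1 * t := by
  let B : ℝ →+ ℝ := AddMonoidHom.mk' (fun t => A t - A 1 * t) (by intro x y; rw [hA]; ring)
  have hB : ∀ t, B t = A t - A 1 * t := fun t => rfl
  have hBq : ∀ q : ℚ, B (q : ℝ) = 0 := by
    intro q
    have := map_ratCast_smul B ℝ ℝ q 1
    simp only [smul_eq_mul, mul_one] at this
    rw [this, hB 1]
    simp
  have hbd : ∀ t, B t ≤ M + |A 1| * (|a| + |b|) := by
    intro t
    obtain ⟨q, hq1, hq2⟩ := exists_rat_btwn (show t - b < t - a by linarith)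
    have e : B t = B (t - q) := by rw [map_sub, hBq, sub_zero]
    rw [e, hB]
    have h1 := hM (t - q) (by linarith) (by linarith)
    have h2 : |t - q| ≤ |a| + |b| := by
      rw [abs_le]
      constructor
      · linarith [neg_abs_le a, abs_nonneg b]
      · linarith [le_abs_self b, abs_nonneg a]
    have h3 : -(A 1 * (t - q)) ≤ |A 1| * |t - q| := by
      rw [← abs_mul]; exact neg_le_abs _
    have h4 := mul_le_mul_of_nonneg_left h2 (abs_nonneg (A 1))
    linarith
  have hle : ∀ t, B t ≤ 0 := by
    intro t
    by_contra hc
    push Not at hc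
    obtain ⟨n, hn⟩ := exists_nat_gt ((M + |A 1| * (|a| + |b|)) / B t)
    rw [div_lt_iff₀ hc] at hn
    have h1 := hbd (n • t)
    rw [map_nsmul, nsmul_eq_mul] at h1
    linarith
  intro t
  have h1 := hle t
  have h2 := hle (-t)
  rw [map_neg] at h2
  have := hB t
  linarith

lemma mult_bdd (φ : ℝ → ℝ) (h0 : ∀ x, 0 ≤ x → 0 ≤ φ x) (h1 : φ 1 = 1)
    (hm : ∀ x y, 0 ≤ x → 0 ≤ y → φ (x * y) = φ x * φ y) (a b M : ℝ) (ha : 0 < a) (hab : a < b)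
    (hM : ∀ t, a < t → t < b → φ t ≤ M) : ∃ α : ℝ, ∀ x, 0 < x → φ x = x ^ α := by
  have hpos : ∀ x, 0 < x → 0 < φ x := by
    intro x hx
    refine lt_of_le_of_ne (h0 x hx.le) ?_
    intro h
    have := hm x x⁻¹ hx.le (inv_pos.2 hx).le
    rw [mul_inv_cancel₀ hx.ne', h1, ← h] at this
    simp at this
  have hlin := additive_bdd (fun t => Real.log (φ (Real.exp t))) ?_ (Real.log a) (Real.log b)
    (Real.log M) (Real.log_lt_log ha hab) ?_
  · refine ⟨Real.log (φ (Real.exp 1)), fun x hx => ?_⟩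
    have := hlin (Real.log x)
    simp only [Real.exp_log hx] at this
    rw [Real.rpow_def_of_pos hx, mul_comm, ← this, Real.exp_log (hpos x hx)]
  · intro x y
    rw [Real.exp_add, hm _ _ (Real.exp_pos x).le (Real.exp_pos y).le,
      Real.log_mul (hpos _ (Real.exp_pos x)).ne' (hpos _ (Real.exp_pos y)).ne']
  · intro t h2 h3
    apply Real.log_le_log (hpos _ (Real.exp_pos t))
    apply hM
    · rwa [← Real.log_lt_iff_lt_exp ha]
    · rwa [← Real.lt_log_iff_exp_lt (ha.trans hab)]

lemma majMod_pair (x y u v : ℝ) (hx : 0 < x) (hu : 0 < u) (hv : 0 < v) (huy : u ≤ y)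
    (hvy : v ≤ y) (hs : x + y = u + v) : MajMod ![x, y] ![u, v] := by
  have hy : 0 < y := by linarith
  refine ⟨⟨by simpa using hs, ?_⟩, ?_⟩
  · intro k
    apply topSum_le_of
    · have := le_topSum ![x, y] k ∅ (by simp)
      simpa using this
    intro s hsk
    have key : ∃ t : Finset (Fin 2), t.card ≤ s.card ∧ ∑ i ∈ s, ![u, v] i ≤ ∑ i ∈ t, ![x, y] i := by
      by_cases m0 : (0 : Fin 2) ∈ s <;> by_cases m1 : (1 : Fin 2) ∈ s
      · have e : s = Finset.univ := by
          ext i; fin_cases i <;> simp [m0, m1]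
        refine ⟨s, le_rfl, ?_⟩
        rw [e]
        simp [hs]
      · have e : s = {0} := by
          ext i; fin_cases i <;> simp [m0, m1]
        refine ⟨{1}, ?_, ?_⟩ <;> rw [e] <;> simp [huy]
      · have e : s = {1} := by
          ext i; fin_cases i <;> simp [m0, m1]
        refine ⟨{1}, ?_, ?_⟩ <;> rw [e] <;> simp [hvy]
      · have e : s = ∅ := by
          ext i; fin_cases i <;> simp [m0, m1]
        refine ⟨∅, ?_, ?_⟩ <;> rw [e] <;> simp
    obtain ⟨t, ht1, ht2⟩ := key
    exact ht2.trans (le_topSum _ k t (ht1.trans hsk))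
  · have e1 : (Finset.univ.filter fun i => ![x, y] i ≠ 0) = Finset.univ := by
      ext i; fin_cases i <;> simp [hx.ne', hy.ne']
    have e2 : (Finset.univ.filter fun i => ![u, v] i ≠ 0) = Finset.univ := by
      ext i; fin_cases i <;> simp [hu.ne', hv.ne']
    unfold supp0
    rw [e1, e2]

lemma nonneg_pair (x y : ℝ) (hx : 0 < x) (hy : 0 < y) : NonnegVec ![x, y] := by
  intro i
  fin_cases i
  · exact hx.le
  · exact hy.le

lemma phi_pair (Φ : ∀ n : ℕ, (Fin n → ℝ) → ℝ) (h : PhiBase Φ) (x y : ℝ) (hx : 0 < x)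
    (hy : 0 < y) : Φ 2 ![x, y] = Φ 1 (fun _ => x) + Φ 1 (fun _ => y) := by
  rw [phi_sum Φ h 2 _ (nonneg_pair x y hx hy)]
  simp

lemma phi_fA (Φ : ∀ n : ℕ, (Fin n → ℝ) → ℝ) (h : PhiBase Φ) (α : ℝ)
    (hα : ∀ x, 0 < x → Φ 1 (fun _ => x) = x ^ α) (n : ℕ) (p : Fin n → ℝ) (hp : NonnegVec p) :
    Φ n p = fA α p := by
  rw [phi_sum Φ h n p hp]
  apply Finset.sum_congr rfl
  intro i _
  split_ifs with h0
  · rw [h0]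
    exact h.2.2.2.2.2.2
  · exact hα _ (lt_of_le_of_ne (hp i) (Ne.symm h0))

lemma strict_out (α : ℝ) (hα : α < 0 ∨ 1 < α) : 2 < (1 / 2 : ℝ) ^ α + (3 / 2 : ℝ) ^ α := by
  rcases hα with h | h
  · have l1 := Real.log_le_sub_one_of_pos (show (0 : ℝ) < 1 / 2 by norm_num)
    have l2 := Real.log_lt_sub_one_of_pos (show (0 : ℝ) < 3 / 2 by norm_num) (by norm_num)
    rw [Real.rpow_def_of_pos (by norm_num), Real.rpow_def_of_pos (by norm_num)]
    have e1 := Real.add_one_le_exp (Real.log (1 / 2) * α)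
    have e2 := Real.add_one_le_exp (Real.log (3 / 2) * α)
    nlinarith
  · have h1 := one_add_mul_self_lt_rpow_one_add (s := -1 / 2) (by norm_num) (by norm_num) h
    have h2 := one_add_mul_self_lt_rpow_one_add (s := 1 / 2) (by norm_num) (by norm_num) h
    norm_num at h1 h2 ⊢
    linarith

lemma strict_in (α : ℝ) (h0 : 0 < α) (h1 : α < 1) : (1 / 2 : ℝ) ^ α + (3 / 2 : ℝ) ^ α < 2 := by
  have h1' := rpow_one_add_lt_one_add_mul_self (s := -1 / 2) (by norm_num) (by norm_num) h0 h1
  have h2' := rpow_one_add_lt_one_add_mul_self (s := 1 / 2) (by norm_num) (by norm_num) h0 h1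
  norm_num at h1' h2' ⊢
  linarith

/-- **Classification of monotone homomorphisms on the modified majorization
semiring.**  A homomorphism that is antitone for `≽₀,₁` is `f_α` for some
`α ∈ [0,1]`, and one that is monotone for `≽₀,₁` is `f_α` for some
`α ∈ (−∞,0] ∪ [1,∞)`; conversely all these `f_α` have the listed
properties. -/
theorem classification_monotone_homs_modified :
    (∀ Φ : ∀ n : ℕ, (Fin n → ℝ) → ℝ, PhiBase Φ →
      (∀ (m n : ℕ) (p : Fin m → ℝ) (q : Fin n → ℝ), NonnegVec p → NonnegVec q →
        MajMod p q → Φ m p ≤ Φ n q) →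
      ∃ α : ℝ, 0 ≤ α ∧ α ≤ 1 ∧
        ∀ (n : ℕ) (p : Fin n → ℝ), NonnegVec p → Φ n p = fA α p) ∧
    (∀ α : ℝ, 0 ≤ α → α ≤ 1 →
      PhiBase (fun n p => fA α p) ∧
      ∀ (m n : ℕ) (p : Fin m → ℝ) (q : Fin n → ℝ), NonnegVec p → NonnegVec q →
        MajMod p q → fA α p ≤ fA α q) ∧
    (∀ Φ : ∀ n : ℕ, (Fin n → ℝ) → ℝ, PhiBase Φ →
      (∀ (m n : ℕ) (p : Fin m → ℝ) (q : Fin n → ℝ), NonnegVec p → NonnegVec q →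
        MajMod p q → Φ n q ≤ Φ m p) →
      ∃ α : ℝ, (α ≤ 0 ∨ 1 ≤ α) ∧
        ∀ (n : ℕ) (p : Fin n → ℝ), NonnegVec p → Φ n p = fA α p) ∧
    (∀ α : ℝ, (α ≤ 0 ∨ 1 ≤ α) →
      PhiBase (fun n p => fA α p) ∧
      ∀ (m n : ℕ) (p : Fin m → ℝ) (q : Fin n → ℝ), NonnegVec p → NonnegVec q →
        MajMod p q → fA α q ≤ fA α p) := by
  refine ⟨?_, ?_, ?_, ?_⟩
  · intro Φ hΦ hmono
    have hnn : ∀ x, 0 ≤ x → 0 ≤ Φ 1 (fun _ => x) := fun x hx => hΦ.1 1 _ (fun _ => hx)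
    have hpair : ∀ x y u v : ℝ, 0 < x → 0 < u → 0 < v → u ≤ y → v ≤ y → x + y = u + v →
        Φ 1 (fun _ => x) + Φ 1 (fun _ => y) ≤ Φ 1 (fun _ => u) + Φ 1 (fun _ => v) := by
      intro x y u v hx hu hv huy hvy hs
      have hy : 0 < y := by linarith
      rw [← phi_pair Φ hΦ x y hx hy, ← phi_pair Φ hΦ u v hu hv]
      exact hmono _ _ _ _ (nonneg_pair x y hx hy) (nonneg_pair u v hu hv)
        (majMod_pair x y u v hx hu hv huy hvy hs)
    obtain ⟨α, hα⟩ := mult_bdd (fun x => Φ 1 (fun _ => x)) hnn hΦ.2.2.2.2.2.1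
      (phi_mul Φ hΦ) 1 2 (Φ 1 (fun _ => 2) + Φ 1 (fun _ => 2)) (by norm_num) (by norm_num) (by
        intro t h1 h2
        have := hpair t (4 - t) 2 2 (by linarith) (by norm_num) (by norm_num) (by linarith)
          (by linarith) (by ring)
        have := hnn (4 - t) (by linarith)
        linarith)
    have hc := hpair (1 / 2) (3 / 2) 1 1 (by norm_num) (by norm_num) (by norm_num) (by norm_num)
      (by norm_num) (by norm_num)
    rw [hα _ (by norm_num), hα _ (by norm_num), hα _ (by norm_num), Real.one_rpow] at hc
    refine ⟨α, ?_, ?_, phi_fA Φ hΦ α hα⟩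
    · by_contra h
      push Not at h
      linarith [strict_out α (Or.inl h)]
    · by_contra h
      push Not at h
      linarith [strict_out α (Or.inr h)]
  · intro α h0 h1
    exact ⟨fA_base α, fun m n p q hp hq h => fA_in α h0 h1 p q hp hq h⟩
  · intro Φ hΦ hmono
    have hnn : ∀ x, 0 ≤ x → 0 ≤ Φ 1 (fun _ => x) := fun x hx => hΦ.1 1 _ (fun _ => hx)
    have hpair : ∀ x y u v : ℝ, 0 < x → 0 < u → 0 < v → u ≤ y → v ≤ y → x + y = u + v →
        Φ 1 (fun _ => u) + Φ 1 (fun _ => v) ≤ Φ 1 (fun _ => x) + Φ 1 (fun _ => y) := by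
      intro x y u v hx hu hv huy hvy hs
      have hy : 0 < y := by linarith
      rw [← phi_pair Φ hΦ x y hx hy, ← phi_pair Φ hΦ u v hu hv]
      exact hmono _ _ _ _ (nonneg_pair x y hx hy) (nonneg_pair u v hu hv)
        (majMod_pair x y u v hx hu hv huy hvy hs)
    obtain ⟨α, hα⟩ := mult_bdd (fun x => Φ 1 (fun _ => x)) hnn hΦ.2.2.2.2.2.1
      (phi_mul Φ hΦ) 1 2 (Φ 1 (fun _ => 1) + Φ 1 (fun _ => 2)) (by norm_num) (by norm_num) (by
        intro t h1 h2
        have := hpair 1 2 t (3 - t) (by linarith) (by linarith) (by linarith) (by linarith)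
          (by linarith) (by ring)
        have := hnn (3 - t) (by linarith)
        linarith)
    have hc := hpair (1 / 2) (3 / 2) 1 1 (by norm_num) (by norm_num) (by norm_num) (by norm_num)
      (by norm_num) (by norm_num)
    rw [hα (1 / 2) (by norm_num), hα (3 / 2) (by norm_num), hα 1 (by norm_num),
      Real.one_rpow] at hc
    refine ⟨α, ?_, phi_fA Φ hΦ α hα⟩
    by_contra h
    push Not at h
    linarith [strict_in α h.1 h.2]
  · intro α hα
    exact ⟨fA_base α, fun m n p q hp hq h => fA_out α hα p q hp hq h⟩
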